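/- Let ℋ be a complex Hilbert space, A ∈ B(ℋ), and k ≥ 2 with k ≤ dim ℋ. Then Ω_k(A) = ⋂{Ω_1(A + 2e^{iξ}‖A‖P) : ξ ∈ [0,2π), P ∈ P_{k−1}}, i.e., Ω_k(A) is the intersection of the sets Ω_1(A + 2e^{iξ}‖A‖P) over all ξ ∈ [0,2π) and all rank-(k−1) orthogonal projections P on ℋ. -/

import Mathlib

noncomputable section

open scoped InnerProductSpace
open Complex

variable {H : Type*} [NormedAddCommGroup H] [InnerProductSpace ℂ H] [CompleteSpace H]

/-- `P` is an orthogonal projection: self-adjoint and idempotent. -/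
def IsOrthProj (P : H →L[ℂ] H) : Prop :=
  IsSelfAdjoint P ∧ P ∘L P = P

/-- The rank of a bounded operator, as a cardinal. -/
def opRank (F : H →L[ℂ] H) : Cardinal :=
  Module.rank ℂ (LinearMap.range (F : H →ₗ[ℂ] H))

/-- The rank-`k` numerical range `Λ_k(A)`. -/
def rankKRange (k : ℕ) (A : H →L[ℂ] H) : Set ℂ :=
  { lam | ∃ P : H →L[ℂ] H, IsOrthProj P ∧ opRank P = k ∧ P ∘L A ∘L P = lam • P }

/-- The classical numerical range `W(A)`. -/
def numRange (A : H →L[ℂ] H) : Set ℂ :=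
  { z | ∃ x : H, ‖x‖ = 1 ∧ ⟪x, A x⟫_ℂ = z }

/-- `λ_k(T)`: the supremum over `k`-dimensional compressions of the `k`-th largest
eigenvalue of the compression (Courant–Fischer form: sup over `k`-dimensional
subspaces of the infimum of the Rayleigh quotient). -/
def lambdaSA (k : ℕ) (T : H →L[ℂ] H) : ℝ :=
  sSup { t : ℝ | ∃ V : Submodule ℂ H, Module.finrank ℂ V = k ∧
    ∀ x ∈ V, ‖x‖ = 1 → t ≤ (⟪x, T x⟫_ℂ).re }

/-- The real part `(T + T*)/2` of an operator. -/
def reOp (T : H →L[ℂ] H) : H →L[ℂ] H :=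
  (2 : ℂ)⁻¹ • (T + ContinuousLinearMap.adjoint T)

/-- The set `Ω_k(A)`. -/
def omegaK (k : ℕ) (A : H →L[ℂ] H) : Set ℂ :=
  { μ | ∀ ξ ∈ Set.Ico (0 : ℝ) (2 * Real.pi),
      (Complex.exp (ξ * Complex.I) * μ).re ≤ lambdaSA k (reOp (Complex.exp (ξ * Complex.I) • A)) }

/-!
An `(n + m)`-dimensional subspace meets the kernel of a rank-`n` operator `F` in dimension at least
`m`, so `λ_{n+m}(T) ≤ λ_m(T + F)`. Conversely, let `T` be self-adjoint and `λ_{n+1}(T) < t`. Then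
the positive part of `T - t` has rank at most `n`; if `P` is a rank-`n` projection whose range
contains that of this positive part, then `T ≤ t + c` already implies `T ≤ t + c P`, that is,
`λ_1(T - c P) ≤ t`. Since `t > -‖T‖`, any `c ≥ 2‖T‖` will do. The two bounds are applied to
`T = Re (e^{iθ} A)`, for which `‖T‖ ≤ ‖A‖`: the second one is used with the `ξ` for which
`e^{iθ} e^{iξ} = -1`.
-/

section LinearAlgebra

variable {K E F : Type*} [DivisionRing K] [AddCommGroup E] [Module K E]
  [AddCommGroup F] [Module K F]

lemma exists_submodule_between_finrank_eq {M V : Submodule K E} [FiniteDimensional K M]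
    (hMV : M ≤ V) {n : ℕ} (hMn : Module.finrank K M ≤ n) (hnV : (n : Cardinal) ≤ Module.rank K V) :
    ∃ W : Submodule K E, M ≤ W ∧ W ≤ V ∧ FiniteDimensional K W ∧ Module.finrank K W = n := by
  induction n, hMn using Nat.le_induction with
  | base => exact ⟨M, le_rfl, hMV, inferInstance, rfl⟩
  | succ n _ ih =>
    obtain ⟨W, hMW, hWV, _, rfl⟩ := ih (le_trans (by gcongr; omega) hnV)
    have hVW : ¬ V ≤ W := fun h => by
      have := hnV.trans (Submodule.rank_mono h)
      rw [← Module.finrank_eq_rank, Nat.cast_le] at this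
      omega
    obtain ⟨x, hxV, hxW⟩ := SetLike.not_le_iff_exists.1 hVW
    have hspan : Module.finrank K (K ∙ x) = 1 :=
      finrank_span_singleton fun h => hxW (h ▸ W.zero_mem)
    have hle := Submodule.finrank_add_le_finrank_add_finrank W (K ∙ x)
    have hlt : Module.finrank K W < Module.finrank K (W ⊔ K ∙ x : Submodule K E) :=
      Submodule.finrank_lt_finrank_of_lt <| left_lt_sup.2 <| by
        rwa [Submodule.span_singleton_le_iff_mem]
    refine ⟨W ⊔ K ∙ x, hMW.trans le_sup_left, sup_le hWV ?_, inferInstance, by omega⟩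
    rwa [Submodule.span_singleton_le_iff_mem]

lemma exists_submodule_le_finrank_eq {V : Submodule K E} {n : ℕ}
    (hn : (n : Cardinal) ≤ Module.rank K V) :
    ∃ W ≤ V, Module.finrank K W = n := by
  obtain ⟨W, -, hWV, -, hW⟩ := exists_submodule_between_finrank_eq bot_le (by simp) hn
  exact ⟨W, hWV, hW⟩

lemma exists_submodule_finrank_eq {n : ℕ} (hn : (n : Cardinal) ≤ Module.rank K E) :
    ∃ W : Submodule K E, Module.finrank K W = n := by
  obtain ⟨W, -, hW⟩ := exists_submodule_le_finrank_eq (V := (⊤ : Submodule K E)) (by rwa [rank_top])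
  exact ⟨W, hW⟩

lemma exists_submodule_le_ker_finrank_eq (f : E →ₗ[K] F) {V : Submodule K E} [FiniteDimensional K V]
    {n m : ℕ} (hf : f.rank ≤ n) (hV : Module.finrank K V = n + m) :
    ∃ W ≤ V, W ≤ LinearMap.ker f ∧ Module.finrank K W = m := by
  have hrange : Module.finrank K (LinearMap.range (f.domRestrict V)) ≤ n := by
    have := (LinearMap.rank_comp_le_left V.subtype f).trans hf
    exact Module.finrank_le_of_rank_le this
  have hker : m ≤ Module.finrank K (LinearMap.ker (f.domRestrict V)) := by
    have := (f.domRestrict V).finrank_range_add_finrank_ker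
    omega
  obtain ⟨W, hWker, hW⟩ := exists_submodule_le_finrank_eq
    (Module.finrank_eq_rank K (LinearMap.ker (f.domRestrict V)) ▸ Nat.cast_le.2 hker)
  refine ⟨W.map V.subtype, Submodule.map_subtype_le V W, ?_, ?_⟩
  · rintro _ ⟨v, hv, rfl⟩
    exact hWker hv
  · rw [Submodule.finrank_map_subtype_eq, hW]

end LinearAlgebra

section CStarAlgebra

variable {A : Type*} [CStarAlgebra A] [PartialOrder A] [StarOrderedRing A]

lemma posPart_le_algebraMap {a : A} (ha : IsSelfAdjoint a) {c : ℝ} (hc : 0 ≤ c)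
    (hac : a ≤ algebraMap ℝ A c) : a⁺ ≤ algebraMap ℝ A c := by
  rw [CFC.posPart_def, cfcₙ_eq_cfc]
  exact cfc_le_algebraMap _ _ _ fun x hx =>
    sup_le ((le_algebraMap_iff_spectrum_le ha).1 hac x hx) hc

lemma le_smul_of_isStarProjection_of_mul_posPart {a p : A} (ha : IsSelfAdjoint a)
    (hp : IsStarProjection p) (hpa : p * a⁺ = a⁺) {c : ℝ} (hc : 0 ≤ c)
    (hac : a ≤ algebraMap ℝ A c) : a ≤ c • p := by
  have hap : a⁺ * p = a⁺ := by
    simpa [hp.isSelfAdjoint.star_eq, (CFC.posPart_nonneg a).isSelfAdjoint.star_eq]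
      using congrArg star hpa
  calc a ≤ a⁺ := CFC.le_posPart ha
    _ = p * a⁺ * p := by rw [hpa, hap]
    _ ≤ p * algebraMap ℝ A c * p :=
      hp.isSelfAdjoint.conjugate_le_conjugate (posPart_le_algebraMap ha hc hac)
    _ = c • p := by
      rw [Algebra.algebraMap_eq_smul_one, mul_smul_comm, mul_one, smul_mul_assoc,
        hp.isIdempotentElem.eq]

end CStarAlgebra

section InnerProductSpace

variable {E : Type*} [NormedAddCommGroup E] [InnerProductSpace ℂ E]

lemma re_inner_le_re_inner_of_le {S T : E →L[ℂ] E} (h : S ≤ T) (x : E) :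
    (⟪x, S x⟫_ℂ).re ≤ (⟪x, T x⟫_ℂ).re := by
  simpa [inner_sub_right] using ((ContinuousLinearMap.le_def S T).1 h).re_inner_nonneg_right x

lemma re_inner_algebraMap_apply (r : ℝ) (x : E) :
    (⟪x, algebraMap ℝ (E →L[ℂ] E) r x⟫_ℂ).re = r * ‖x‖ ^ 2 := by
  rw [Algebra.algebraMap_eq_smul_one, smul_apply,
    one_apply_eq_self, inner_smul_right_eq_smul, inner_self_eq_norm_sq_to_K]
  norm_cast

lemma abs_re_inner_apply_le_norm (T : E →L[ℂ] E) {x : E} (hx : ‖x‖ = 1) :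
    |(⟪x, T x⟫_ℂ).re| ≤ ‖T‖ :=
  calc |(⟪x, T x⟫_ℂ).re| ≤ ‖⟪x, T x⟫_ℂ‖ := abs_re_le_norm _
    _ ≤ ‖x‖ * ‖T x‖ := norm_inner_le_norm _ _
    _ ≤ ‖T‖ := by simpa [hx] using T.le_opNorm x

lemma exists_mem_norm_eq_one_of_finrank_pos {V : Submodule ℂ E} (hV : 0 < Module.finrank ℂ V) :
    ∃ x ∈ V, ‖x‖ = 1 := by
  have := Module.nontrivial_of_finrank_pos hV
  obtain ⟨x, hx⟩ := exists_norm_eq V zero_le_one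
  exact ⟨x, x.2, hx⟩

lemma opRank_smul_le (r : ℝ) (F : E →L[ℂ] E) : opRank (r • F) ≤ opRank F := by
  refine Submodule.rank_mono ?_
  rintro _ ⟨x, rfl⟩
  exact ⟨r • x, F.map_smul_of_tower r x⟩

lemma opRank_starProjection (W : Submodule ℂ E) [W.HasOrthogonalProjection] :
    opRank W.starProjection = Module.rank ℂ W := by
  rw [opRank, W.range_starProjection]

variable {k : ℕ} {T : E →L[ℂ] E} {t : ℝ}

lemma le_lambdaSA (hk : 1 ≤ k) {V : Submodule ℂ E} (hV : Module.finrank ℂ V = k)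
    (ht : ∀ x ∈ V, ‖x‖ = 1 → t ≤ (⟪x, T x⟫_ℂ).re) : t ≤ lambdaSA k T := by
  refine le_csSup ⟨‖T‖, ?_⟩ ⟨V, hV, ht⟩
  rintro s ⟨W, hW, hs⟩
  obtain ⟨x, hxW, hx⟩ := exists_mem_norm_eq_one_of_finrank_pos (V := W) (by omega)
  exact (hs x hxW hx).trans (abs_le.1 (abs_re_inner_apply_le_norm T hx)).2

lemma lambdaSA_le (hk : (k : Cardinal) ≤ Module.rank ℂ E)
    (h : ∀ (V : Submodule ℂ E) (s : ℝ), Module.finrank ℂ V = k →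
      (∀ x ∈ V, ‖x‖ = 1 → s ≤ (⟪x, T x⟫_ℂ).re) → s ≤ t) : lambdaSA k T ≤ t := by
  obtain ⟨V, hV⟩ := exists_submodule_finrank_eq hk
  refine csSup_le ⟨-‖T‖, V, hV, fun x _ hx => ?_⟩ ?_
  · exact (abs_le.1 (abs_re_inner_apply_le_norm T hx)).1
  · rintro s ⟨W, hW, hs⟩
    exact h W s hW hs

lemma neg_norm_le_lambdaSA (hk₁ : 1 ≤ k) (hk : (k : Cardinal) ≤ Module.rank ℂ E)
    (T : E →L[ℂ] E) : -‖T‖ ≤ lambdaSA k T := by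
  obtain ⟨V, hV⟩ := exists_submodule_finrank_eq hk
  exact le_lambdaSA hk₁ hV fun x _ hx => (abs_le.1 (abs_re_inner_apply_le_norm T hx)).1

lemma lambdaSA_le_of_le_algebraMap (hk₁ : 1 ≤ k) (hk : (k : Cardinal) ≤ Module.rank ℂ E)
    (hT : T ≤ algebraMap ℝ _ t) : lambdaSA k T ≤ t := by
  refine lambdaSA_le hk fun V s hV hs => ?_
  obtain ⟨x, hxV, hx⟩ := exists_mem_norm_eq_one_of_finrank_pos (V := V) (by omega)
  calc s ≤ (⟪x, T x⟫_ℂ).re := hs x hxV hx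
    _ ≤ (⟪x, algebraMap ℝ (E →L[ℂ] E) t x⟫_ℂ).re := re_inner_le_re_inner_of_le hT x
    _ = t := by rw [re_inner_algebraMap_apply, hx, one_pow, mul_one]

lemma lambdaSA_add_le_lambdaSA_add {n m : ℕ} (hm : 1 ≤ m)
    (hnm : ((n + m : ℕ) : Cardinal) ≤ Module.rank ℂ E) (T : E →L[ℂ] E) {F : E →L[ℂ] E}
    (hF : opRank F ≤ n) : lambdaSA (n + m) T ≤ lambdaSA m (T + F) := by
  refine lambdaSA_le hnm fun V s hV hs => ?_
  have : FiniteDimensional ℂ V := Module.finite_of_finrank_pos (by omega)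
  obtain ⟨W, hWV, hWF, hW⟩ := exists_submodule_le_ker_finrank_eq (F : E →ₗ[ℂ] E) hF hV
  refine le_lambdaSA hm hW fun x hxW hx => ?_
  have hFx : F x = 0 := hWF hxW
  simpa [hFx] using hs x (hWV hxW) hx

end InnerProductSpace

section SpectralProjection

variable {k n : ℕ} {T : H →L[ℂ] H} {t : ℝ}

lemma isOrthProj_starProjection (W : Submodule ℂ H) [W.HasOrthogonalProjection] :
    IsOrthProj W.starProjection :=
  ⟨isSelfAdjoint_starProjection W, W.isIdempotentElem_starProjection⟩

lemma opRank_posPart_sub_lt (hk : 1 ≤ k) (hT : IsSelfAdjoint T) (ht : lambdaSA k T < t) :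
    opRank (T - algebraMap ℝ _ t)⁺ < k := by
  by_contra! hrank
  set S := T - algebraMap ℝ (H →L[ℂ] H) t with hS
  have hSsa : IsSelfAdjoint S := hT.sub (.algebraMap _ (.all t))
  obtain ⟨V, hVrange, hV⟩ := exists_submodule_le_finrank_eq hrank
  refine ht.not_ge (le_lambdaSA hk hV fun x hxV hx => ?_)
  -- On its range, the positive part of `S` agrees with `S`, since `S⁻ * S⁺ = 0`.
  have hSx : S x = S⁺ x := by
    obtain ⟨z, rfl⟩ := hVrange hxV
    have hmul : S * S⁺ = S⁺ * S⁺ := by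
      nth_rw 1 [← CFC.posPart_sub_negPart S hSsa]
      rw [sub_mul, CFC.negPart_mul_posPart, sub_zero]
    exact DFunLike.congr_fun hmul z
  have hnonneg : 0 ≤ (⟪x, S x⟫_ℂ).re := by
    simpa [hSx] using re_inner_le_re_inner_of_le (CFC.posPart_nonneg S) x
  rw [hS, sub_apply, inner_sub_right, sub_re, re_inner_algebraMap_apply, hx]
    at hnonneg
  linarith

lemma exists_isOrthProj_le_algebraMap_add_smul (hn : ((n + 1 : ℕ) : Cardinal) ≤ Module.rank ℂ H)
    (hT : IsSelfAdjoint T) {c : ℝ} (hc : 0 ≤ c) (hTc : T ≤ algebraMap ℝ _ (t + c))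
    (ht : lambdaSA (n + 1) T < t) :
    ∃ P : H →L[ℂ] H, IsOrthProj P ∧ opRank P = n ∧ T ≤ algebraMap ℝ _ t + c • P := by
  set S := T - algebraMap ℝ (H →L[ℂ] H) t with hS
  have hSsa : IsSelfAdjoint S := hT.sub (.algebraMap _ (.all t))
  set M := LinearMap.range ((S⁺ : H →L[ℂ] H) : H →ₗ[ℂ] H)
  have hM : Module.rank ℂ M < (n + 1 : ℕ) := opRank_posPart_sub_lt n.succ_pos hT ht
  have : FiniteDimensional ℂ M :=
    Module.rank_lt_aleph0_iff.1 (hM.trans Cardinal.natCast_lt_aleph0)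
  have hMn : Module.finrank ℂ M ≤ n := by
    rwa [← Module.finrank_eq_rank, Nat.cast_lt, Nat.lt_succ_iff] at hM
  obtain ⟨W, hMW, -, _, hW⟩ := exists_submodule_between_finrank_eq (le_top : M ≤ ⊤) hMn
    (by rw [rank_top]; exact le_trans (by gcongr; omega) hn)
  refine ⟨W.starProjection, isOrthProj_starProjection W, ?_, ?_⟩
  · rw [opRank_starProjection, ← Module.finrank_eq_rank, hW]
  · rw [← sub_le_iff_le_add']
    refine le_smul_of_isStarProjection_of_mul_posPart hSsa isStarProjection_starProjection ?_ hc ?_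
    · ext x
      exact Submodule.starProjection_eq_self_iff.2 (hMW ⟨x, rfl⟩)
    · rwa [hS, sub_le_iff_le_add', ← map_add]

lemma le_lambdaSA_succ_of_forall_isOrthProj (hn : ((n + 1 : ℕ) : Cardinal) ≤ Module.rank ℂ H)
    (hT : IsSelfAdjoint T) {a s : ℝ} (ha : ‖T‖ ≤ a)
    (hs : ∀ P : H →L[ℂ] H, IsOrthProj P → opRank P = n → s ≤ lambdaSA 1 (T - (2 * a) • P)) :
    s ≤ lambdaSA (n + 1) T := by
  refine le_of_forall_gt_imp_ge_of_dense fun t ht => ?_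
  have hat : -‖T‖ < t := (neg_norm_le_lambdaSA n.succ_pos hn T).trans_lt ht
  have hTa : T ≤ algebraMap ℝ _ (t + 2 * a) :=
    hT.le_algebraMap_norm_self.trans (algebraMap_mono _ (by linarith))
  obtain ⟨P, hP, hPn, hTP⟩ := exists_isOrthProj_le_algebraMap_add_smul hn hT
    (by linarith [norm_nonneg T]) hTa ht
  exact (hs P hP hPn).trans <| lambdaSA_le_of_le_algebraMap le_rfl
    (le_trans (by gcongr; omega) hn) (sub_le_iff_le_add.2 hTP)

end SpectralProjection

lemma reOp_eq_realPart (T : H →L[ℂ] H) : reOp T = realPart T := by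
  rw [realPart_apply_coe, reOp, ← ContinuousLinearMap.star_eq_adjoint, ← Complex.coe_smul]
  norm_num

lemma isSelfAdjoint_reOp (T : H →L[ℂ] H) : IsSelfAdjoint (reOp T) :=
  reOp_eq_realPart T ▸ (realPart T).2

lemma norm_reOp_le (T : H →L[ℂ] H) : ‖reOp T‖ ≤ ‖T‖ :=
  reOp_eq_realPart T ▸ realPart.norm_le T

lemma reOp_add_smul (T : H →L[ℂ] H) {P : H →L[ℂ] H} (hP : IsSelfAdjoint P) (w : ℂ) :
    reOp (T + w • P) = reOp T + w.re • P := by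
  have hw : (2 : ℂ)⁻¹ * (w + starRingEnd ℂ w) = w.re := by
    rw [add_conj]
    push_cast
    ring
  calc reOp (T + w • P) = reOp T + ((2 : ℂ)⁻¹ * (w + starRingEnd ℂ w)) • P := by
        simp only [reOp, map_add, map_smulₛₗ, hP.adjoint_eq]
        module
    _ = reOp T + w.re • P := by rw [hw, Complex.coe_smul]

lemma exists_mem_Ico_exp_mul_I_eq {z : ℂ} (hz : ‖z‖ = 1) :
    ∃ ξ ∈ Set.Ico (0 : ℝ) (2 * Real.pi), Complex.exp (ξ * Complex.I) = z := by
  obtain ⟨θ, rfl⟩ := (Complex.norm_eq_one_iff z).1 hz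
  have hper : Function.Periodic (fun x : ℝ => Complex.exp (x * Complex.I)) (2 * Real.pi) :=
    fun x => by simpa [add_mul] using Complex.exp_periodic (x * Complex.I)
  obtain ⟨ξ, hξ, h⟩ := hper.exists_mem_Ico₀ Real.two_pi_pos θ
  exact ⟨ξ, hξ, h.symm⟩

/-- For `2 ≤ k ≤ dim ℋ`, `Ω_k(A)` is the intersection of the sets
`Ω_1(A + 2e^{iξ}‖A‖P)` over all `ξ ∈ [0,2π)` and all rank-`(k-1)` orthogonal
projections `P`. -/
theorem omegaK_eq_iInter_rank_k_sub_one
    (k : ℕ) (hk2 : 2 ≤ k) (hk : (k : Cardinal) ≤ Module.rank ℂ H)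
    (A : H →L[ℂ] H) :
    omegaK k A =
      ⋂ ξ ∈ Set.Ico (0 : ℝ) (2 * Real.pi),
        ⋂ P ∈ {P : H →L[ℂ] H | IsOrthProj P ∧ opRank P = ((k - 1 : ℕ) : Cardinal)},
          omegaK 1 (A + (2 * Complex.exp (ξ * Complex.I) * (‖A‖ : ℂ)) • P) := by
  obtain ⟨n, rfl⟩ := Nat.exists_eq_add_of_le' (one_le_two.trans hk2)
  ext μ
  simp only [Set.mem_iInter, Set.mem_ofPred_eq, Nat.add_sub_cancel]
  constructor
  · rintro hμ ξ - P ⟨hP, hPn⟩ θ hθ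
    rw [smul_add, smul_smul, reOp_add_smul _ hP.1]
    exact (hμ θ hθ).trans (lambdaSA_add_le_lambdaSA_add le_rfl hk _
      ((opRank_smul_le _ P).trans hPn.le))
  · intro hμ θ hθ
    obtain ⟨ξ, hξ, hξθ⟩ := exists_mem_Ico_exp_mul_I_eq (z := -(Complex.exp (θ * Complex.I))⁻¹)
      (by simp [Complex.norm_exp_ofReal_mul_I])
    have hnorm : ‖reOp (Complex.exp (θ * Complex.I) • A)‖ ≤ ‖A‖ := by
      simpa [norm_smul, Complex.norm_exp_ofReal_mul_I] using
        norm_reOp_le (Complex.exp (θ * Complex.I) • A)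
    refine le_lambdaSA_succ_of_forall_isOrthProj hk (isSelfAdjoint_reOp _) hnorm fun P hP hPn => ?_
    have hphase : Complex.exp (θ * Complex.I) * (2 * Complex.exp (ξ * Complex.I) * ‖A‖) =
        ((-(2 * ‖A‖) : ℝ) : ℂ) := by
      rw [hξθ]
      field_simp [Complex.exp_ne_zero]
      push_cast
      ring
    have h := hμ ξ hξ P ⟨hP, hPn⟩ θ hθ
    rwa [smul_add, smul_smul, reOp_add_smul _ hP.1, hphase, ofReal_re, neg_smul, ← sub_eq_add_neg]
      at h
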